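/- arXiv:1910.11252 — 6 statements merged into one kernel-verified Lean document; each statement's English description precedes it below -/
import Mathlib

section
/- Let ρ, c, p, μ : ℝ³ → ℝ and u⃗ = (u₁,u₂,u₃) : ℝ³ → ℝ³ be continuously differentiable. Then at every point of ℝ³: μ ∇·(c u⃗) + Σ_{j=1}^{3} [ ½ u_j ∇·(ρ u_j u⃗) + ½ ρ u_j (u⃗·∇u_j) ] + u⃗·∇p + c u⃗·∇μ + p ∇·u⃗ = ∇·( ( ½ρ|u⃗|² + p + cμ ) u⃗ ); i.e. the inviscid terms of the iNS/CH system, contracted with the entropy variables, combine into the divergence of the entropy flux (½ρ|u⃗|² + p + cμ)u⃗. -/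
/-!
The identity is pointwise and follows from the product rule alone. The pressure and chemical
terms satisfy `u · ∇p + p ∇·u = ∇·(p u)` and `μ ∇·(c u) + c u · ∇μ = ∇·(c μ u)`. For the kinetic
term the same rule gives, for each `j`, `½ u_j ∇·(ρ u_j u) + ½ ρ u_j u · ∇u_j = ∇·(½ ρ u_j² u)`,
and these are summed over `j`. After `pd_mul` and `pd_add` expand every divergence into first
partial derivatives of `ρ`, `c`, `p`, `μ` and the `u_j`, the claim is a polynomial identity.
-/

/-- `pd i g x` is the `i`-th partial derivative of `g : ℝ³ → ℝ` at `x`. -/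
noncomputable def pd (i : Fin 3) (g : (Fin 3 → ℝ) → ℝ) (x : Fin 3 → ℝ) : ℝ :=
  fderiv ℝ g x (Pi.single i 1)

theorem pd_mul (i : Fin 3) {f g : (Fin 3 → ℝ) → ℝ} {x : Fin 3 → ℝ}
    (hf : DifferentiableAt ℝ f x) (hg : DifferentiableAt ℝ g x) :
    pd i (fun y => f y * g y) x = f x * pd i g x + g x * pd i f x := by
  simp [pd, fderiv_fun_mul hf hg]

theorem pd_add (i : Fin 3) {f g : (Fin 3 → ℝ) → ℝ} {x : Fin 3 → ℝ}
    (hf : DifferentiableAt ℝ f x) (hg : DifferentiableAt ℝ g x) :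
    pd i (fun y => f y + g y) x = pd i f x + pd i g x := by
  simp [pd, fderiv_fun_add hf hg]

theorem pd_const (i : Fin 3) (a : ℝ) (x : Fin 3 → ℝ) : pd i (fun _ => a) x = 0 := by
  simp [pd]

/-- the inviscid terms of the iNS/CH system, contracted with the
entropy variables, combine into the divergence of the entropy flux
`(½ρ|u|² + p + cμ) u`. -/
theorem inviscid_terms_combine_into_entropy_flux
    (ρ c p μ : (Fin 3 → ℝ) → ℝ) (u : (Fin 3 → ℝ) → Fin 3 → ℝ)
    (hρ : ContDiff ℝ 1 ρ) (hc : ContDiff ℝ 1 c) (hp : ContDiff ℝ 1 p)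
    (hμ : ContDiff ℝ 1 μ) (hu : ContDiff ℝ 1 u) :
    ∀ x : Fin 3 → ℝ,
      μ x * (∑ i : Fin 3, pd i (fun y => c y * u y i) x)
      + (∑ j : Fin 3,
          ((1/2) * u x j * ∑ i : Fin 3, pd i (fun y => ρ y * u y j * u y i) x
            + (1/2) * ρ x * u x j * ∑ i : Fin 3, u x i * pd i (fun y => u y j) x))
      + (∑ i : Fin 3, u x i * pd i p x)
      + c x * (∑ i : Fin 3, u x i * pd i μ x)
      + p x * (∑ i : Fin 3, pd i (fun y => u y i) x)
      = ∑ i : Fin 3, pd i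
          (fun y => ((1/2) * ρ y * (∑ j : Fin 3, (u y j)^2) + p y + c y * μ y) * u y i) x := by
  intro x
  have dρ : DifferentiableAt ℝ ρ x := hρ.differentiable one_ne_zero x
  have dc : DifferentiableAt ℝ c x := hc.differentiable one_ne_zero x
  have dp : DifferentiableAt ℝ p x := hp.differentiable one_ne_zero x
  have dμ : DifferentiableAt ℝ μ x := hμ.differentiable one_ne_zero x
  have du (j : Fin 3) : DifferentiableAt ℝ (fun y => u y j) x :=
    differentiableAt_pi.1 (hu.differentiable one_ne_zero x) j
  have h_chem (i : Fin 3) : pd i (fun y => c y * u y i) x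
      = c x * pd i (fun y => u y i) x + u x i * pd i c x := pd_mul i dc (du i)
  have h_mom (i j : Fin 3) : pd i (fun y => ρ y * u y j * u y i) x
      = ρ x * u x j * pd i (fun y => u y i) x
        + u x i * (ρ x * pd i (fun y => u y j) x + u x j * pd i ρ x) := by
    rw [pd_mul i (dρ.fun_mul (du j)) (du i), pd_mul i dρ (du j)]
  have dsq (j : Fin 3) : DifferentiableAt ℝ (fun y => u y j * u y j) x := (du j).fun_mul (du j)
  have dk : DifferentiableAt ℝ (fun y => (1/2) * ρ y) x := dρ.const_mul _
  have ds : DifferentiableAt ℝ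
      (fun y => u y 0 * u y 0 + u y 1 * u y 1 + u y 2 * u y 2) x :=
    ((dsq 0).fun_add (dsq 1)).fun_add (dsq 2)
  have h_flux (i : Fin 3) : pd i
      (fun y => ((1/2) * ρ y * (∑ j : Fin 3, (u y j)^2) + p y + c y * μ y) * u y i) x
      = ((1/2) * ρ x * (∑ j : Fin 3, (u x j)^2) + p x + c x * μ x) * pd i (fun y => u y i) x
        + u x i * ((1/2) * (∑ j : Fin 3, (u x j)^2) * pd i ρ x
          + ρ x * (∑ j : Fin 3, u x j * pd i (fun y => u y j) x)
          + pd i p x + c x * pd i μ x + μ x * pd i c x) := by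
    simp only [Fin.sum_univ_three, pow_two]
    rw [pd_mul i (((dk.fun_mul ds).fun_add dp).fun_add (dc.fun_mul dμ)) (du i),
      pd_add i ((dk.fun_mul ds).fun_add dp) (dc.fun_mul dμ),
      pd_add i (dk.fun_mul ds) dp, pd_mul i dc dμ, pd_mul i dk ds,
      pd_mul i (differentiableAt_const _) dρ, pd_const,
      pd_add i ((dsq 0).fun_add (dsq 1)) (dsq 2), pd_add i (dsq 0) (dsq 1),
      pd_mul i (du 0) (du 0), pd_mul i (du 1) (du 1), pd_mul i (du 2) (du 2)]
    ring
  simp only [h_chem, h_mom, h_flux]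
  simp only [Fin.sum_univ_three]
  ring
end

section
/- Let σ, ε, M₀, ρ₁, ρ₂, η₁, η₂, κ be real constants with κ > 0, let f₀ : ℝ → ℝ be infinitely differentiable, and let c, p : U → ℝ and u⃗ : U → ℝ³ be infinitely differentiable on an open set U ⊆ ℝ³ × ℝ. Define ρ = ρ₁c + ρ₂(1−c) and assume ρ > 0 on U; define η = η₁c + η₂(1−c), μ = f₀'(c) − (3/2)σε Δc, and S = ½(∇u⃗ + ∇u⃗ᵀ), where all spatial operators act in x. Suppose on U: (i) ∂_t c + ∇·(c u⃗) = M₀ Δμ; (ii) for j = 1,2,3, √ρ ∂_t(√ρ u_j) + ∇·(½ρ u_j u⃗) + ½ρ u⃗·∇u_j + c ∂_j μ = −∂_j p + Σ_{i=1}^{3} ∂_i( 2η S_{ji} ); (iii) ∂_t p + κ ∇·u⃗ = 0. Then with E = f₀(c) + (3/4)σε|∇c|² + ½ρ|u⃗|² + p²/(2κ) and f⃗^E = −(3/2)σε (∂_t c) ∇c + (½ρ|u⃗|² + p + μc) u⃗ − 2η S u⃗ − M₀ μ ∇μ, one has at every point of U: ∂_t E + ∇·f⃗^E = −M₀|∇μ|²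 − 2η S:S. -/
/-!
The identity is the sum of the three balance laws tested against their conjugate variables:
`μ` times the Cahn–Hilliard equation, `u_j` times the `j`-th momentum equation (summed over `j`),
and `p / κ` times the pressure equation. Three facts turn the result into divergence form:

* `∂ₜ(f₀(c) + (3/4)σε|∇c|²) - ∇·((3/2)σε ∂ₜc ∇c) = μ ∂ₜc`, which rests on `∂ₜ∂ᵢc = ∂ᵢ∂ₜc`
  (`td_sd_comm`);
* `√ρ ∂ₜ(√ρ u_j) u_j` sums to `∂ₜ(½ρ|u|²)`, because `√ρ ∂ₜ√ρ = ½∂ₜρ` (`td_sqrt_mul`);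
* the symmetry of `S` gives `S : ∇u = S : S`.

On the open set `U` both partial derivatives are values of the Fréchet derivative on space-time
(`td_eq`, `sd_eq`), so they preserve smoothness and obey the Leibniz rule. After every product has
been expanded, the claim is a polynomial identity in the remaining derivatives.
-/

/-- Time derivative of a scalar field on space-time `ℝ³ × ℝ`. -/
noncomputable def td (g : ((Fin 3 → ℝ) × ℝ) → ℝ) (q : (Fin 3 → ℝ) × ℝ) : ℝ :=
  deriv (fun s => g (q.1, s)) q.2

/-- `i`-th spatial partial derivative of a scalar field on space-time `ℝ³ × ℝ`. -/
noncomputable def sd (i : Fin 3) (g : ((Fin 3 → ℝ) × ℝ) → ℝ) (q : (Fin 3 → ℝ) × ℝ) : ℝ :=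
  fderiv ℝ (fun y => g (y, q.2)) q.1 (Pi.single i 1)

section Calculus

variable {g h : ((Fin 3 → ℝ) × ℝ) → ℝ} {q : (Fin 3 → ℝ) × ℝ}

lemma td_eq (hg : DifferentiableAt ℝ g q) : td g q = fderiv ℝ g q (0, 1) := by
  have h1 : HasDerivAt (fun s : ℝ => (q.1, s)) ((0 : Fin 3 → ℝ), (1 : ℝ)) q.2 :=
    (hasDerivAt_const q.2 q.1).prodMk (hasDerivAt_id q.2)
  exact (HasFDerivAt.comp_hasDerivAt (l := g) q.2 hg.hasFDerivAt h1).deriv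

lemma sd_eq (i : Fin 3) (hg : DifferentiableAt ℝ g q) :
    sd i g q = fderiv ℝ g q (Pi.single i 1, 0) := by
  have h1 : HasFDerivAt (fun y : Fin 3 → ℝ => (y, q.2))
      ((ContinuousLinearMap.id ℝ (Fin 3 → ℝ)).prod 0) q.1 :=
    (hasFDerivAt_id q.1).prodMk (hasFDerivAt_const q.2 q.1)
  have h2 := HasFDerivAt.comp (g := g) q.1 hg.hasFDerivAt h1
  have h3 : sd i g q = _ := congrArg (fun L => L (Pi.single i 1)) h2.fderiv
  simpa using h3

lemma td_const (a : ℝ) : td (fun _ => a) q = 0 := by simp [td]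

lemma sd_const (i : Fin 3) (a : ℝ) : sd i (fun _ => a) q = 0 := by simp [sd]

lemma td_add (hg : DifferentiableAt ℝ g q) (hh : DifferentiableAt ℝ h q) :
    td (fun r => g r + h r) q = td g q + td h q := by
  rw [td_eq hg, td_eq hh, td_eq (hg.fun_add hh), fderiv_fun_add hg hh]; rfl

lemma sd_add (i : Fin 3) (hg : DifferentiableAt ℝ g q) (hh : DifferentiableAt ℝ h q) :
    sd i (fun r => g r + h r) q = sd i g q + sd i h q := by
  rw [sd_eq i hg, sd_eq i hh, sd_eq i (hg.fun_add hh), fderiv_fun_add hg hh]; rfl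

lemma sd_sub (i : Fin 3) (hg : DifferentiableAt ℝ g q) (hh : DifferentiableAt ℝ h q) :
    sd i (fun r => g r - h r) q = sd i g q - sd i h q := by
  rw [sd_eq i hg, sd_eq i hh, sd_eq i (hg.fun_sub hh), fderiv_fun_sub hg hh]; rfl

lemma td_mul (hg : DifferentiableAt ℝ g q) (hh : DifferentiableAt ℝ h q) :
    td (fun r => g r * h r) q = g q * td h q + h q * td g q := by
  rw [td_eq hg, td_eq hh, td_eq (hg.fun_mul hh), fderiv_fun_mul hg hh]; rfl

lemma sd_mul (i : Fin 3) (hg : DifferentiableAt ℝ g q) (hh : DifferentiableAt ℝ h q) :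
    sd i (fun r => g r * h r) q = g q * sd i h q + h q * sd i g q := by
  rw [sd_eq i hg, sd_eq i hh, sd_eq i (hg.fun_mul hh), fderiv_fun_mul hg hh]; rfl

lemma td_comp {f : ℝ → ℝ} (hf : DifferentiableAt ℝ f (g q)) (hg : DifferentiableAt ℝ g q) :
    td (fun r => f (g r)) q = deriv f (g q) * td g q := by
  have h1 := HasFDerivAt.fderiv (hf.hasDerivAt.comp_hasFDerivAt q hg.hasFDerivAt)
  rw [td_eq hg, td_eq (g := fun r => f (g r)) (hf.comp q hg)]
  exact congrArg (fun L => L ((0 : Fin 3 → ℝ), (1 : ℝ))) h1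

/-- The weighted form `√ρ ∂ₜ(√ρ v)` of the inertial term contains no square root after expansion. -/
lemma td_sqrt_mul (hg : DifferentiableAt ℝ g q) (hpos : 0 < g q) (hh : DifferentiableAt ℝ h q) :
    Real.sqrt (g q) * td (fun r => Real.sqrt (g r) * h r) q
      = g q * td h q + 1 / 2 * td g q * h q := by
  have hs : 0 < Real.sqrt (g q) := Real.sqrt_pos.2 hpos
  have h2 : Real.sqrt (g q) * Real.sqrt (g q) = g q := Real.mul_self_sqrt hpos.le
  have hd := Real.hasDerivAt_sqrt hpos.ne'
  rw [td_mul (hg.sqrt hpos.ne') hh, td_comp hd.differentiableAt hg, hd.deriv]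
  field_simp
  rw [pow_two, h2]
  ring

variable {U : Set ((Fin 3 → ℝ) × ℝ)}

lemma smooth_fderiv (hU : IsOpen U) (hg : ContDiffOn ℝ (⊤ : ℕ∞) g U) :
    ContDiffOn ℝ (⊤ : ℕ∞) (fderiv ℝ g) U :=
  hg.fderiv_of_isOpen hU (by simp)

lemma smooth_differentiableAt (hU : IsOpen U) (hg : ContDiffOn ℝ (⊤ : ℕ∞) g U) (hq : q ∈ U) :
    DifferentiableAt ℝ g q :=
  (hg.contDiffAt (hU.mem_nhds hq)).differentiableAt (by simp)

lemma smooth_td (hU : IsOpen U) (hg : ContDiffOn ℝ (⊤ : ℕ∞) g U) :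
    ContDiffOn ℝ (⊤ : ℕ∞) (td g) U :=
  ((smooth_fderiv hU hg).clm_apply contDiffOn_const).congr
    fun _ hr => td_eq (smooth_differentiableAt hU hg hr)

lemma smooth_sd (hU : IsOpen U) (i : Fin 3) (hg : ContDiffOn ℝ (⊤ : ℕ∞) g U) :
    ContDiffOn ℝ (⊤ : ℕ∞) (sd i g) U :=
  ((smooth_fderiv hU hg).clm_apply contDiffOn_const).congr
    fun _ hr => sd_eq i (smooth_differentiableAt hU hg hr)

/-- Mixed partial derivatives commute: symmetry of the second Fréchet derivative. -/
lemma td_sd_comm (hU : IsOpen U) (i : Fin 3) (hg : ContDiffOn ℝ (⊤ : ℕ∞) g U) (hq : q ∈ U) :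
    td (sd i g) q = sd i (td g) q := by
  have hd2 : DifferentiableAt ℝ (fderiv ℝ g) q :=
    ((smooth_fderiv hU hg).contDiffAt (hU.mem_nhds hq)).differentiableAt (by simp)
  have key : ∀ (v : (Fin 3 → ℝ) × ℝ) (G : ((Fin 3 → ℝ) × ℝ) → ℝ),
      (∀ r ∈ U, G r = fderiv ℝ g r v) → ∀ w, fderiv ℝ G q w = fderiv ℝ (fderiv ℝ g) q w v := by
    intro v G hG w
    have he : G =ᶠ[nhds q] fun r => fderiv ℝ g r v :=
      Filter.eventually_of_mem (hU.mem_nhds hq) hG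
    rw [he.fderiv_eq, fderiv_clm_apply hd2 (differentiableAt_const v)]
    simp
  rw [td_eq (smooth_differentiableAt hU (smooth_sd hU i hg) hq),
    sd_eq i (smooth_differentiableAt hU (smooth_td hU hg) hq),
    key _ _ (fun r hr => sd_eq i (smooth_differentiableAt hU hg hr)),
    key _ _ (fun r hr => td_eq (smooth_differentiableAt hU hg hr))]
  have hsymm : IsSymmSndFDerivAt ℝ g q :=
    (hg.contDiffAt (hU.mem_nhds hq)).isSymmSndFDerivAt (by
      rw [minSmoothness_of_isRCLikeNormedField]; exact WithTop.coe_le_coe.2 (le_top : (2 : ℕ∞) ≤ ⊤))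
  exact hsymm _ _

end Calculus

/-- the entropy conservation law of the incompressible
Navier–Stokes / Cahn–Hilliard system (skew-symmetric momentum form with
artificial compressibility, no gravity): `∂ₜE + ∇·f^E = −M₀|∇μ|² − 2η S:S` on `U`. -/
theorem iNSCH_entropy_conservation_law
    (σ ε M₀ ρ₁ ρ₂ η₁ η₂ κ : ℝ) (hκ : 0 < κ)
    (f₀ : ℝ → ℝ) (hf₀ : ContDiff ℝ (⊤ : ℕ∞) f₀)
    (U : Set ((Fin 3 → ℝ) × ℝ)) (hU : IsOpen U)
    (c p : ((Fin 3 → ℝ) × ℝ) → ℝ) (u : ((Fin 3 → ℝ) × ℝ) → Fin 3 → ℝ)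
    (hc : ContDiffOn ℝ (⊤ : ℕ∞) c U) (hp : ContDiffOn ℝ (⊤ : ℕ∞) p U) (hu : ContDiffOn ℝ (⊤ : ℕ∞) u U)
    (ρ η μ : ((Fin 3 → ℝ) × ℝ) → ℝ)
    (hρ : ∀ q, ρ q = ρ₁ * c q + ρ₂ * (1 - c q))
    (hρpos : ∀ q ∈ U, 0 < ρ q)
    (hη : ∀ q, η q = η₁ * c q + η₂ * (1 - c q))
    (hμ : ∀ q, μ q = deriv f₀ (c q) - (3/2) * σ * ε * ∑ i : Fin 3, sd i (sd i c) q)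
    (S : ((Fin 3 → ℝ) × ℝ) → Fin 3 → Fin 3 → ℝ)
    (hS : ∀ q j i, S q j i
      = (1/2) * (sd i (fun r => u r j) q + sd j (fun r => u r i) q))
    -- (i) Cahn–Hilliard equation
    (heq1 : ∀ q ∈ U,
      td c q + ∑ i : Fin 3, sd i (fun r => c r * u r i) q
        = M₀ * ∑ i : Fin 3, sd i (sd i μ) q)
    -- (ii) skew-symmetric momentum equation
    (heq2 : ∀ q ∈ U, ∀ j : Fin 3,
      Real.sqrt (ρ q) * td (fun r => Real.sqrt (ρ r) * u r j) q
        + ∑ i : Fin 3, sd i (fun r => (1/2) * ρ r * u r j * u r i) q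
        + (1/2) * ρ q * ∑ i : Fin 3, u q i * sd i (fun r => u r j) q
        + c q * sd j μ q
      = - sd j p q + ∑ i : Fin 3, sd i (fun r => 2 * η r * S r j i) q)
    -- (iii) artificial compressibility equation
    (heq3 : ∀ q ∈ U, td p q + κ * ∑ i : Fin 3, sd i (fun r => u r i) q = 0)
    (E : ((Fin 3 → ℝ) × ℝ) → ℝ)
    (hE : ∀ q, E q = f₀ (c q) + (3/4) * σ * ε * (∑ i : Fin 3, (sd i c q)^2)
        + (1/2) * ρ q * (∑ j : Fin 3, (u q j)^2) + (p q)^2 / (2 * κ))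
    (fE : ((Fin 3 → ℝ) × ℝ) → Fin 3 → ℝ)
    (hfE : ∀ q i, fE q i
      = -(3/2) * σ * ε * td c q * sd i c q
        + ((1/2) * ρ q * (∑ j : Fin 3, (u q j)^2) + p q + μ q * c q) * u q i
        - 2 * η q * (∑ j : Fin 3, S q i j * u q j)
        - M₀ * μ q * sd i μ q) :
    ∀ q ∈ U,
      td E q + ∑ i : Fin 3, sd i (fun r => fE r i) q
        = - M₀ * (∑ i : Fin 3, (sd i μ q)^2)
          - 2 * η q * ∑ j : Fin 3, ∑ i : Fin 3, (S q j i)^2 := by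
  intro q hq
  have hdiff : ∀ {g : ((Fin 3 → ℝ) × ℝ) → ℝ}, ContDiffOn ℝ (⊤ : ℕ∞) g U →
      DifferentiableAt ℝ g q := fun hg => smooth_differentiableAt hU hg hq
  have su : ∀ j, ContDiffOn ℝ (⊤ : ℕ∞) (fun r => u r j) U := fun j => contDiffOn_pi.1 hu j
  have sc : ∀ i, ContDiffOn ℝ (⊤ : ℕ∞) (sd i c) U := fun i => smooth_sd hU i hc
  have sμ : ContDiffOn ℝ (⊤ : ℕ∞) μ U := by
    rw [funext hμ]
    have hf' : ContDiff ℝ (⊤ : ℕ∞) (deriv f₀) := (hf₀.of_le (by simp)).deriv'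
    exact (hf'.comp_contDiffOn hc).sub (contDiffOn_const.mul
      (ContDiffOn.sum fun i _ => smooth_sd hU i (sc i)))
  have sρ : ContDiffOn ℝ (⊤ : ℕ∞) ρ U := by
    rw [funext hρ]
    exact (contDiffOn_const.mul hc).add (contDiffOn_const.mul (contDiffOn_const.sub hc))
  have sη : ContDiffOn ℝ (⊤ : ℕ∞) η U := by
    rw [funext hη]
    exact (contDiffOn_const.mul hc).add (contDiffOn_const.mul (contDiffOn_const.sub hc))
  have sS : ∀ j i, ContDiffOn ℝ (⊤ : ℕ∞) (fun r => S r j i) U := fun j i => by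
    rw [show (fun r => S r j i) = _ from funext fun r => hS r j i]
    exact contDiffOn_const.mul ((smooth_sd hU i (su j)).add (smooth_sd hU j (su i)))
  have dc := hdiff hc
  have dp := hdiff hp
  have dμ := hdiff sμ
  have dρ := hdiff sρ
  have dη := hdiff sη
  have du := fun j => hdiff (su j)
  have dS := fun j i => hdiff (sS j i)
  have dsc := fun i => hdiff (sc i)
  have dtc := hdiff (smooth_td hU hc)
  have dsμ := fun i => hdiff (smooth_sd hU i sμ)
  have hf₀d : Differentiable ℝ f₀ := hf₀.differentiable (by simp)
  have dfc : DifferentiableAt ℝ (fun r => f₀ (c r)) q := (hf₀d _).comp q dc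
  have comm := fun i => td_sd_comm hU i hc hq
  -- `∂ₜE` in terms of the derivatives of the primitive fields
  have tE : td E q = deriv f₀ (c q) * td c q
      + (3/2) * σ * ε * (∑ i : Fin 3, sd i c q * sd i (td c) q)
      + (1/2) * td ρ q * (∑ j : Fin 3, (u q j)^2)
      + ρ q * (∑ j : Fin 3, u q j * td (fun r => u r j) q) + p q * td p q / κ := by
    rw [funext hE]
    simp only [Fin.sum_univ_three, pow_two, div_eq_mul_inv]
    simp (disch := fun_prop) only [td_add, td_mul, td_const, td_comp (hf₀d _) dc, comm]
    field_simp
    ring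
  -- `∂ᵢ` of the `i`-th component of the flux
  have dF : ∀ i, sd i (fun r => fE r i) q
      = -(3/2) * σ * ε * (td c q * sd i (sd i c) q + sd i c q * sd i (td c) q)
        + ((1/2) * sd i ρ q * (∑ j : Fin 3, (u q j)^2)
            + ρ q * (∑ j : Fin 3, u q j * sd i (fun r => u r j) q)
            + sd i p q + μ q * sd i c q + c q * sd i μ q) * u q i
        + ((1/2) * ρ q * (∑ j : Fin 3, (u q j)^2) + p q + μ q * c q) * sd i (fun r => u r i) q
        - 2 * sd i η q * (∑ j : Fin 3, S q i j * u q j)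
        - 2 * η q * (∑ j : Fin 3, (S q i j * sd i (fun r => u r j) q
            + u q j * sd i (fun r => S r i j) q))
        - M₀ * (sd i μ q)^2 - M₀ * μ q * sd i (sd i μ) q := by
    intro i
    rw [show (fun r => fE r i) = _ from funext fun r => hfE r i]
    simp only [Fin.sum_univ_three, pow_two]
    simp (disch := fun_prop) only [sd_add, sd_sub, sd_mul, sd_const]
    ring
  have symm : ∀ i j, (fun r => S r i j) = fun r => S r j i := fun i j => by
    funext r; rw [hS, hS]; ring
  have symmq : ∀ i j, S q i j = S q j i := fun i j => congrFun (symm i j) q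
  have e1 := heq1 q hq
  have e2 := heq2 q hq
  have e3 := heq3 q hq
  have hμq := hμ q
  simp only [td_sqrt_mul dρ (hρpos q hq) (du _)] at e2
  simp only [Fin.sum_univ_three] at e1 e2 e3 hμq ⊢
  simp (disch := fun_prop) only [sd_mul, sd_const] at e1 e2
  have e20 := e2 0
  have e21 := e2 1
  have e22 := e2 2
  have e3' : p q * td p q / κ = - p q * (sd 0 (fun r => u r 0) q + sd 1 (fun r => u r 1) q
      + sd 2 (fun r => u r 2) q) := by
    rw [div_eq_iff hκ.ne']
    linear_combination p q * e3
  rw [tE, dF, dF, dF, e3']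
  simp only [Fin.sum_univ_three]
  -- one representative of each off-diagonal pair, so that the symmetry of `S` is syntactic
  simp only [symm 1 0, symm 2 0, symm 2 1, symmq 1 0, symmq 2 0, symmq 2 1] at e20 e21 e22 ⊢
  -- in `S : S`, one factor is replaced by the symmetrised velocity gradient
  linear_combination μ q * e1 + u q 0 * e20 + u q 1 * e21 + u q 2 * e22 - td c q * hμq
    + 2 * η q * (S q 0 0 * hS q 0 0 + S q 1 1 * hS q 1 1 + S q 2 2 * hS q 2 2
      + 2 * S q 0 1 * hS q 0 1 + 2 * S q 0 2 * hS q 0 2 + 2 * S q 1 2 * hS q 1 2)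
end

section
/- Let κ ≠ 0 and, for each side s ∈ {L,R}, let C_s, U_s, V1_s, V2_s, P_s, μ_s, ρ_s ∈ ℝ be the face-normal state values, and let ρ*, U*, P*, V1*, V2* ∈ ℝ be arbitrary star values. Define W_s = (μ_s, U_s, V1_s, V2_s, P_s/κ), F* = ( ⟨CU⟩, ½ρ*U*² + P*, ½ρ*U*V1*, ½ρ*U*V2*, 0 ), F^{ERS}_s = ( 0, ½ρ*U*² + ½ρ_sU_s² − ½ρ*U*U_s + C_s⟨μ⟩, ½ρ*U*V1* + ½ρ_sU_sV1_s − ½ρ*U*V1_s, ½ρ*U*V2* + ½ρ_sU_sV2_s − ½ρ*U*V2_s, κU* ), and F^{loc}_s = ( 0, ½ρ_sU_s² + μ_sC_s, ½ρ_sU_sV1_s, ½ρ_sU_sV2_s, κU_s ). Then the interior boundary entropy contribution satisfies the identity: −⟦W⟧·F* − ⟦ W·(F^{ERS} − F^{loc}) ⟧ = ½ρ*U*⟦U² + V1² + V2²⟧ − ρ*U*( U*⟦U⟧ + V1*⟦V1⟧ + V2*⟦V2⟧ ) − P*⟦U⟧ − ⟦P⟧U* + ⟦PU⟧; i.e. with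 the diamond-flux choice for the non-conservative terms, the exact-Riemann-solver interface entropy production of the iNS/CH system equals the entropy production Δ_e^{ERS} of the incompressible Navier–Stokes exact Riemann solver. -/
/-- with the diamond-flux choice for the non-conservative terms,
the exact-Riemann-solver interface entropy production of the iNS/CH system
equals the entropy production `Δ_e^{ERS}` of the incompressible Navier–Stokes
exact Riemann solver. -/
theorem ERS_interface_entropy_production
    (κ : ℝ) (hκ : κ ≠ 0)
    (CL CR UL UR V1L V1R V2L V2R PL PR μL μR ρL ρR : ℝ)
    (ρs Us Ps V1s V2s : ℝ)
    (WL WR Fstar FEL FER FlocL FlocR : Fin 5 → ℝ)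
    (hWL : WL = ![μL, UL, V1L, V2L, PL / κ])
    (hWR : WR = ![μR, UR, V1R, V2R, PR / κ])
    (hFstar : Fstar = ![(CL * UL + CR * UR) / 2, (1/2) * ρs * Us^2 + Ps,
        (1/2) * ρs * Us * V1s, (1/2) * ρs * Us * V2s, 0])
    (hFEL : FEL = ![0,
        (1/2) * ρs * Us^2 + (1/2) * ρL * UL^2 - (1/2) * ρs * Us * UL + CL * ((μL + μR) / 2),
        (1/2) * ρs * Us * V1s + (1/2) * ρL * UL * V1L - (1/2) * ρs * Us * V1L,
        (1/2) * ρs * Us * V2s + (1/2) * ρL * UL * V2L - (1/2) * ρs * Us * V2L,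
        κ * Us])
    (hFER : FER = ![0,
        (1/2) * ρs * Us^2 + (1/2) * ρR * UR^2 - (1/2) * ρs * Us * UR + CR * ((μL + μR) / 2),
        (1/2) * ρs * Us * V1s + (1/2) * ρR * UR * V1R - (1/2) * ρs * Us * V1R,
        (1/2) * ρs * Us * V2s + (1/2) * ρR * UR * V2R - (1/2) * ρs * Us * V2R,
        κ * Us])
    (hFlocL : FlocL = ![0, (1/2) * ρL * UL^2 + μL * CL,
        (1/2) * ρL * UL * V1L, (1/2) * ρL * UL * V2L, κ * UL])
    (hFlocR : FlocR = ![0, (1/2) * ρR * UR^2 + μR * CR,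
        (1/2) * ρR * UR * V1R, (1/2) * ρR * UR * V2R, κ * UR]) :
    -(∑ k : Fin 5, (WR k - WL k) * Fstar k)
      - ((∑ k : Fin 5, WR k * (FER k - FlocR k)) - ∑ k : Fin 5, WL k * (FEL k - FlocL k))
    = (1/2) * ρs * Us * ((UR^2 + V1R^2 + V2R^2) - (UL^2 + V1L^2 + V2L^2))
      - ρs * Us * (Us * (UR - UL) + V1s * (V1R - V1L) + V2s * (V2R - V2L))
      - Ps * (UR - UL) - (PR - PL) * Us + (PR * UR - PL * UL) := by
  subst hWL hWR hFstar hFEL hFER hFlocL hFlocR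
  -- The pressure entry `P / κ` of `W` meets the factor `κ` of the last flux entry.
  have h (p x y : ℝ) : p / κ * (κ * x - κ * y) = p * (x - y) := by
    field_simp
  -- After cancelling `κ`, the identity is polynomial; the chemical terms drop out
  -- because `⟦μ⟧⟨CU⟩ + ⟦CU⟧⟨μ⟩ = ⟦μCU⟧`.
  simp [Fin.sum_univ_five, h]
  ring
end

section
/- Let C, U_n, V1, V2, P, μ ∈ ℝ, ρ > 0, κ > 0, and set λ⁺ = ( U_n + √(U_n² + 4κ/ρ) ) / 2. Define the wall entropy variables W = (μ, U_n, V1, V2, P/κ), the exact-Riemann-solver wall numerical flux F* = (0, P + ρλ⁺U_n, 0, 0, 0), the wall diamond flux Φ⋄ = (0, ½ρU_n² + Cμ, ½ρU_nV1, ½ρU_nV2, 0), and the local non-conservative normal contribution Φ^{loc} = (0, ½ρU_n² + μC, ½ρU_nV1, ½ρU_nV2, κU_n). Then the physical boundary entropy contribution equals W·F* + W·(Φ⋄ − Φ^{loc}) = ρλ⁺U_n², and since λ⁺ > 0 it is nonnegative; i.e. the exact-Riemann-solver wall treatment is entropy dissipative. -/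
/-- the exact-Riemann-solver wall treatment produces the entropy
contribution `ρλ⁺U_n² ≥ 0`, i.e. it is entropy dissipative. -/
theorem ERS_wall_entropy_dissipative
    (C Un V1 V2 P μ ρ κ : ℝ) (hρ : 0 < ρ) (hκ : 0 < κ)
    (lamP : ℝ) (hlamP : lamP = (Un + Real.sqrt (Un^2 + 4 * κ / ρ)) / 2)
    (W Fstar Φd Φloc : Fin 5 → ℝ)
    (hW : W = ![μ, Un, V1, V2, P / κ])
    (hFstar : Fstar = ![0, P + ρ * lamP * Un, 0, 0, 0])
    (hΦd : Φd = ![0, (1/2) * ρ * Un^2 + C * μ,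
        (1/2) * ρ * Un * V1, (1/2) * ρ * Un * V2, 0])
    (hΦloc : Φloc = ![0, (1/2) * ρ * Un^2 + μ * C,
        (1/2) * ρ * Un * V1, (1/2) * ρ * Un * V2, κ * Un]) :
    ((∑ k : Fin 5, W k * Fstar k) + (∑ k : Fin 5, W k * (Φd k - Φloc k))
        = ρ * lamP * Un^2)
    ∧ 0 < lamP
    ∧ 0 ≤ (∑ k : Fin 5, W k * Fstar k) + (∑ k : Fin 5, W k * (Φd k - Φloc k)) := by
  -- The radicand strictly exceeds `Un ^ 2`, so its root exceeds `|Un| ≥ -Un`.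
  have hpos : 0 < lamP := by
    have hlt : |Un| < Real.sqrt (Un^2 + 4 * κ / ρ) := by
      rw [← Real.sqrt_sq_eq_abs]
      exact Real.sqrt_lt_sqrt (sq_nonneg Un) (lt_add_of_pos_right _ (by positivity))
    have := neg_abs_le Un
    linarith
  -- The pressure work `P * Un` in `W·F*` cancels against `(P / κ) * (κ * Un)`.
  have heq : (∑ k : Fin 5, W k * Fstar k) + (∑ k : Fin 5, W k * (Φd k - Φloc k))
      = ρ * lamP * Un^2 := by
    subst hW hFstar hΦd hΦloc
    simp [Fin.sum_univ_succ]
    field_simp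
    ring
  exact ⟨heq, hpos, heq ▸ by positivity⟩
end

section
/- Let W_L, W_R ∈ ℝ⁵ (left and right entropy variables), F_L, F_R ∈ ℝ⁵ (left and right normal viscous fluxes), β ≥ 0, and write μ_s = (W_s)₁ for the first (chemical potential) component. Define the BR1 numerical fluxes W* = ⟨W⟩ and F* = ⟨F⟩ + β⟦μ⟧e₁ (interface stabilization on the first component). Then the viscous interior boundary term satisfies: ⟦W⟧·F* − ⟦W·F⟧ + W*·⟦F⟧ = β⟦μ⟧² ≥ 0; in particular it vanishes for β = 0 and is dissipative for β > 0. -/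
/-- the BR1 viscous interior boundary term equals `β⟦μ⟧² ≥ 0`:
it vanishes for `β = 0` and is dissipative for `β > 0`. -/
theorem BR1_viscous_interior_boundary_term
    (WL WR FL FR : Fin 5 → ℝ) (β : ℝ) (hβ : 0 ≤ β)
    (Wstar Fstar : Fin 5 → ℝ)
    (hWstar : ∀ k, Wstar k = (WL k + WR k) / 2)
    (hFstar : ∀ k : Fin 5, Fstar k = (FL k + FR k) / 2
        + β * (WR 0 - WL 0) * (if k = 0 then 1 else 0)) :
    ((∑ k : Fin 5, (WR k - WL k) * Fstar k)
      - ((∑ k : Fin 5, WR k * FR k) - ∑ k : Fin 5, WL k * FL k)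
      + (∑ k : Fin 5, Wstar k * (FR k - FL k))
      = β * (WR 0 - WL 0)^2)
    ∧ 0 ≤ β * (WR 0 - WL 0)^2 := by
  refine ⟨?_, by positivity⟩
  -- The product rule `⟦W·F⟧ = ⟦W⟧·⟨F⟩ + ⟨W⟩·⟦F⟧` holds in each component, so the central
  -- parts of the fluxes cancel and only the stabilization `β⟦μ⟧e₁` paired with `⟦W⟧` survives.
  have key : ∀ k : Fin 5, (WR k - WL k) * Fstar k - (WR k * FR k - WL k * FL k)
      + Wstar k * (FR k - FL k)
      = if k = 0 then β * (WR 0 - WL 0) * (WR k - WL k) else 0 := by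
    intro k
    rw [hWstar, hFstar]
    split_ifs <;> ring
  rw [← Finset.sum_sub_distrib, ← Finset.sum_sub_distrib, ← Finset.sum_add_distrib,
    Finset.sum_congr rfl fun k _ => key k, Finset.sum_ite_eq' Finset.univ 0]
  simp only [Finset.mem_univ, if_true]
  ring
end

section
/- Let σ, ε, β ∈ ℝ, let C_L, C_R : ℝ → ℝ be differentiable functions of time (left and right concentration traces at an interface), and let G_L, G_R : ℝ → ℝ be arbitrary functions (left and right normal components of the concentration gradient). With the BR1 flux with interface stabilization G* = ⟨G⟩ + β⟦C⟧ and C_t* = ⟨C'⟩, the Cahn–Hilliard interior boundary term satisfies, at every time t: (3/2)σε ( ⟦C'⟧ G* + ⟦G⟧ C_t* − ⟦C'G⟧ ) = (3/2)σε β ⟦C⟧⟦C'⟧ = (3/4)σε β d/dt ( ⟦C⟧² ); in particular it vanishes for β = 0, and for β ≥ 0 it is the time derivative of the nonnegative interface energy (3/4)σεβ⟦C⟧². -/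
/-- the Cahn–Hilliard interior boundary term with BR1 interface
stabilization equals `(3/2)σεβ⟦C⟧⟦C'⟧ = (3/4)σεβ d/dt(⟦C⟧²)`. -/
theorem CH_interior_boundary_term
    (σ ε β : ℝ) (CL CR Gleft Gright : ℝ → ℝ)
    (hCL : Differentiable ℝ CL) (hCR : Differentiable ℝ CR)
    (Gstar Ctstar : ℝ → ℝ)
    (hGstar : ∀ t, Gstar t = (Gleft t + Gright t) / 2 + β * (CR t - CL t))
    (hCtstar : ∀ t, Ctstar t = (deriv CL t + deriv CR t) / 2) :
    ∀ t : ℝ,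
      ((3/2) * σ * ε * ((deriv CR t - deriv CL t) * Gstar t
            + (Gright t - Gleft t) * Ctstar t
            - (deriv CR t * Gright t - deriv CL t * Gleft t))
        = (3/2) * σ * ε * β * (CR t - CL t) * (deriv CR t - deriv CL t))
      ∧ ((3/2) * σ * ε * β * (CR t - CL t) * (deriv CR t - deriv CL t)
        = (3/4) * σ * ε * β * deriv (fun s => (CR s - CL s)^2) t) := by
  intro t
  have hsq : HasDerivAt (fun s => (CR s - CL s)^2)
      (2 * (CR t - CL t) * (deriv CR t - deriv CL t)) t := by
    simpa using ((hCR t).hasDerivAt.fun_sub (hCL t).hasDerivAt).fun_pow 2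
  refine ⟨?_, ?_⟩
  · -- The product rule `⟦C'G⟧ = ⟦C'⟧⟨G⟩ + ⟦G⟧⟨C'⟩` leaves only the penalty part of `G*`.
    rw [hGstar, hCtstar]
    ring
  · rw [hsq.deriv]
    ring
end
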